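/- arXiv:1309.0942 — 7 statements merged into one kernel-verified Lean document; each statement's English description precedes it below -/
import Mathlib

section
/- Let d ≥ 1, let ν be a measure on ℝ^d with ∫_{ℝ^d} (1 ∧ |z|²) ν(dz) < ∞, let σ be an invertible d×d real matrix, and let b : ℝ^d → ℝ^d. Let Φ ∈ C([0,∞)) ∩ C²((0,∞)). Let f : ℝ^d → (0,∞) be a C² function which is constant outside a compact set. Then for every x ∈ ℝ^d all the integrals below converge absolutely, and ℒ(Φ∘f)(x) − Φ'(f(x)) · ℒf(x) = ∫_{ℝ^d} Ψ_Φ(f(x + σz), f(x)) ν(dz). -/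
open MeasureTheory

lemma levy_taylor {E : Type*} [NormedAddCommGroup E] [NormedSpace ℝ E] [ProperSpace E]
    (g : E → ℝ) (hg : ContDiff ℝ 2 g) (x : E) (R : ℝ) :
    ∃ M : ℝ, 0 ≤ M ∧ ∀ h : E, ‖h‖ ≤ R → ‖g (x + h) - g x - fderiv ℝ g x h‖ ≤ M * ‖h‖ ^ 2 := by
  have h1 : ContDiff ℝ 1 (fderiv ℝ g) := hg.fderiv_right (by norm_num)
  have h2 : Continuous (fderiv ℝ (fderiv ℝ g)) := h1.continuous_fderiv (by norm_num)
  obtain ⟨M, hM⟩ := (isCompact_closedBall x R).exists_bound_of_continuousOn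
    (f := fderiv ℝ (fderiv ℝ g)) h2.continuousOn
  refine ⟨|M|, abs_nonneg _, fun h hh => ?_⟩
  have key := (convex_closedBall x ‖h‖).norm_image_sub_le_of_norm_hasFDerivWithin_le'
    (f := g) (f' := fderiv ℝ g) (φ := fderiv ℝ g x) (C := |M| * ‖h‖) (x := x) (y := x + h)
    (fun y _ => ((hg.differentiable (by norm_num)) y).hasFDerivAt.hasFDerivWithinAt)
    (fun y hy => by
      have hy' : ‖y - x‖ ≤ ‖h‖ := by simpa [dist_eq_norm] using hy
      have := (convex_closedBall x R).norm_image_sub_le_of_norm_fderiv_le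
        (f := fderiv ℝ g) (C := |M|) (x := x) (y := y)
        (fun y _ => (h1.differentiable (by norm_num)) y)
        (fun y hy => (hM y hy).trans (le_abs_self M))
        (by simpa using (norm_nonneg h).trans hh)
        (by simpa [dist_eq_norm] using hy'.trans hh)
      exact this.trans (by gcongr))
    (by simp) (by simp)
  simpa [pow_two, mul_assoc] using key

lemma levy_integrable {E : Type*} [NormedAddCommGroup E] [NormedSpace ℝ E] [ProperSpace E]
    [MeasurableSpace E] [BorelSpace E] (ν : Measure E)
    (hν : ∫⁻ z, ENNReal.ofReal (min 1 (‖z‖ ^ 2)) ∂ν ≠ ⊤)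
    (g : E → ℝ) (hg : ContDiff ℝ 2 g) (B : ℝ) (hB : ∀ y, ‖g y‖ ≤ B) (L : E →L[ℝ] E) (x : E) :
    Integrable (fun z => g (x + L z) - g x -
      Set.indicator {z | ‖z‖ ≤ 1} (fun z => fderiv ℝ g x (L z)) z) ν := by
  obtain ⟨M, hM0, hM⟩ := levy_taylor g hg x ‖L‖
  have hgc := hg.continuous
  have hB0 : 0 ≤ B := (norm_nonneg _).trans (hB x)
  have hm : Integrable (fun z : E => min 1 (‖z‖ ^ 2)) ν := by
    refine ⟨(by fun_prop : Continuous fun z : E => min 1 (‖z‖ ^ 2)).measurable.aestronglyMeasurable, ?_⟩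
    rw [hasFiniteIntegral_iff_ofReal (Filter.Eventually.of_forall fun z => by positivity)]
    exact hν.lt_top
  refine (hm.const_mul (M * ‖L‖ ^ 2 + 2 * B)).mono' ?_ (Filter.Eventually.of_forall fun z => ?_)
  · refine Measurable.aestronglyMeasurable ?_
    refine Measurable.sub (by fun_prop : Continuous fun z : E => g (x + L z) - g x).measurable ?_
    refine Measurable.indicator (by fun_prop : Continuous fun z : E => fderiv ℝ g x (L z)).measurable ?_
    exact (isClosed_le continuous_norm continuous_const).measurableSet
  · by_cases hz : ‖z‖ ≤ 1
    · rw [Set.indicator_of_mem (by exact hz)]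
      have hLz := L.le_opNorm z
      have h2 : ‖z‖ ^ 2 ≤ 1 := pow_le_one₀ (norm_nonneg _) hz
      rw [min_eq_right h2]
      calc _ ≤ M * ‖L z‖ ^ 2 := hM _ (hLz.trans (mul_le_of_le_one_right (norm_nonneg _) hz))
        _ ≤ M * (‖L‖ * ‖z‖) ^ 2 := by gcongr
        _ ≤ _ := by nlinarith [mul_nonneg hB0 (sq_nonneg ‖z‖)]
    · rw [Set.indicator_of_notMem (by exact hz)]
      have h2 : 1 ≤ ‖z‖ ^ 2 := one_le_pow₀ (not_le.1 hz).le
      rw [min_eq_left h2, sub_zero]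
      have := norm_sub_le (g (x + L z)) (g x)
      have := hB x
      have := hB (x + L z)
      have : 0 ≤ M * ‖L‖ ^ 2 := by positivity
      linarith

lemma levy_bdd {E : Type*} [TopologicalSpace E] (g : E → ℝ) (hg : Continuous g)
    (K : Set E) (c : ℝ) (hK : IsCompact K) (h : ∀ x ∉ K, g x = c) : ∃ B, ∀ y, ‖g y‖ ≤ B := by
  obtain ⟨B, hB⟩ := hK.exists_bound_of_continuousOn hg.continuousOn
  refine ⟨max B ‖c‖, fun y => ?_⟩
  by_cases hy : y ∈ K
  · exact (hB y hy).trans (le_max_left _ _)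
  · rw [h y hy]; exact le_max_right _ _


/-- The carré-du-champ identity (formula (W3)) for the generator
`ℒf(x) = ⟨∇f(x), b(x)⟩ + ∫ [f(x+σz) − f(x) − ⟨∇f(x), σz⟩ 1_{|z|≤1}] ν(dz)`:
for a positive `C²` function `f` which is constant outside a compact set,
all integrals converge absolutely and
`ℒ(Φ∘f)(x) − Φ'(f(x))·ℒf(x) = ∫ Ψ_Φ(f(x+σz), f(x)) ν(dz)`. -/
theorem stmt_1 (d : ℕ) (hd : 1 ≤ d)
    (ν : Measure (EuclideanSpace ℝ (Fin d)))
    (hν : ∫⁻ z, ENNReal.ofReal (min 1 (‖z‖ ^ 2)) ∂ν ≠ ⊤)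
    (σ : Matrix (Fin d) (Fin d) ℝ) (hσ : IsUnit σ)
    (b : EuclideanSpace ℝ (Fin d) → EuclideanSpace ℝ (Fin d))
    (Φ : ℝ → ℝ) (hΦc : ContinuousOn Φ (Set.Ici 0)) (hΦ : ContDiffOn ℝ 2 Φ (Set.Ioi 0))
    (f : EuclideanSpace ℝ (Fin d) → ℝ) (hf : ContDiff ℝ 2 f) (hfpos : ∀ x, 0 < f x)
    (hfc : ∃ (K : Set (EuclideanSpace ℝ (Fin d))) (c : ℝ), IsCompact K ∧ ∀ x ∉ K, f x = c)
    (x : EuclideanSpace ℝ (Fin d)) :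
    Integrable (fun z => f (x + Matrix.toEuclideanLin σ z) - f x -
        Set.indicator {z | ‖z‖ ≤ 1}
          (fun z => fderiv ℝ f x (Matrix.toEuclideanLin σ z)) z) ν ∧
    Integrable (fun z => Φ (f (x + Matrix.toEuclideanLin σ z)) - Φ (f x) -
        Set.indicator {z | ‖z‖ ≤ 1}
          (fun z => fderiv ℝ (fun y => Φ (f y)) x (Matrix.toEuclideanLin σ z)) z) ν ∧
    Integrable (fun z => Φ (f (x + Matrix.toEuclideanLin σ z)) - Φ (f x) -
        deriv Φ (f x) * (f (x + Matrix.toEuclideanLin σ z) - f x)) ν ∧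
    (fderiv ℝ (fun y => Φ (f y)) x (b x) +
        ∫ z, (Φ (f (x + Matrix.toEuclideanLin σ z)) - Φ (f x) -
          Set.indicator {z | ‖z‖ ≤ 1}
            (fun z => fderiv ℝ (fun y => Φ (f y)) x (Matrix.toEuclideanLin σ z)) z) ∂ν)
      - deriv Φ (f x) * (fderiv ℝ f x (b x) +
        ∫ z, (f (x + Matrix.toEuclideanLin σ z) - f x -
          Set.indicator {z | ‖z‖ ≤ 1}
            (fun z => fderiv ℝ f x (Matrix.toEuclideanLin σ z)) z) ∂ν)
      = ∫ z, (Φ (f (x + Matrix.toEuclideanLin σ z)) - Φ (f x) -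
          deriv Φ (f x) * (f (x + Matrix.toEuclideanLin σ z) - f x)) ∂ν := by
  obtain ⟨K, c, hK, hc⟩ := hfc
  have hg : ContDiff ℝ 2 (fun y => Φ (f y)) := by
    rw [contDiff_iff_contDiffAt]
    intro y
    exact ContDiffAt.comp y (hΦ.contDiffAt (Ioi_mem_nhds (hfpos y))) hf.contDiffAt
  obtain ⟨B1, hB1⟩ := levy_bdd f hf.continuous K c hK hc
  obtain ⟨B2, hB2⟩ := levy_bdd (fun y => Φ (f y)) hg.continuous K (Φ c) hK
    (fun y hy => by simp only [hc y hy])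
  have I1 := levy_integrable ν hν f hf B1 hB1
    (LinearMap.toContinuousLinearMap (Matrix.toEuclideanLin σ)) x
  have I2 := levy_integrable ν hν (fun y => Φ (f y)) hg B2 hB2
    (LinearMap.toContinuousLinearMap (Matrix.toEuclideanLin σ)) x
  simp only [LinearMap.coe_toContinuousLinearMap'] at I1 I2
  have hchain : fderiv ℝ (fun y => Φ (f y)) x = deriv Φ (f x) • fderiv ℝ f x := by
    have hΦd : DifferentiableAt ℝ Φ (f x) :=
      (hΦ.contDiffAt (Ioi_mem_nhds (hfpos x))).differentiableAt (by norm_num)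
    exact (hΦd.hasDerivAt.comp_hasFDerivAt x
      ((hf.differentiable (by norm_num)) x).hasFDerivAt).fderiv
  have heq : (fun z => Φ (f (x + Matrix.toEuclideanLin σ z)) - Φ (f x) -
        deriv Φ (f x) * (f (x + Matrix.toEuclideanLin σ z) - f x)) =
      fun z => (Φ (f (x + Matrix.toEuclideanLin σ z)) - Φ (f x) -
        Set.indicator {z | ‖z‖ ≤ 1}
          (fun z => fderiv ℝ (fun y => Φ (f y)) x (Matrix.toEuclideanLin σ z)) z) -
        deriv Φ (f x) * (f (x + Matrix.toEuclideanLin σ z) - f x -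
        Set.indicator {z | ‖z‖ ≤ 1}
          (fun z => fderiv ℝ f x (Matrix.toEuclideanLin σ z)) z) := by
    funext z
    rw [hchain]
    by_cases hz : ‖z‖ ≤ 1
    · rw [Set.indicator_of_mem (by exact hz), Set.indicator_of_mem (by exact hz)]
      simp only [smul_apply, smul_eq_mul]
      ring
    · rw [Set.indicator_of_notMem (by exact hz), Set.indicator_of_notMem (by exact hz)]
      ring
  refine ⟨I1, I2, ?_, ?_⟩
  · rw [heq]
    exact I2.sub (I1.const_mul _)
  · rw [heq, integral_sub I2 (I1.const_mul _), integral_const_mul]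
    have : fderiv ℝ (fun y => Φ (f y)) x (b x) = deriv Φ (f x) * fderiv ℝ f x (b x) := by
      rw [hchain]; simp
    rw [this]
    ring
end

section
/- Let d ≥ 1, α ∈ (0,2), κ₁, κ₂ > 0, λ₁, λ₂ ∈ ℝ, and t ≥ 0. Let ν be the measure on ℝ^d given by ν(dz) = n(z) dz where n is measurable with κ₁/|z|^{d+α} ≤ n(z) ≤ κ₂/|z|^{d+α} for all z ≠ 0. Let ψ : ℝ^d → ℝ^d be a C¹ diffeomorphism such that |det Dψ(z)| ≥ e^{λ₁ t d} for all z and |ψ(z)| ≤ e^{λ₂ t}|z| for all z. Then the pushforward measure ν∘ψ^{-1} satisfies ν∘ψ^{-1} ≤ (κ₂/κ₁) · e^{(λ₂(d+α) − λ₁ d) t} · ν, i.e. (ν∘ψ^{-1})(A) ≤ (κ₂/κ₁) e^{(λ₂(d+α) − λ₁ d) t} ν(A) for every Borel set A ⊆ ℝ^d. -/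
open MeasureTheory

/-- Pushforward density estimate for α-stable-like Lévy measures: if
`κ₁/|z|^{d+α} ≤ dν/dz ≤ κ₂/|z|^{d+α}` and `ψ` is a `C¹` diffeomorphism with
`|det Dψ| ≥ e^{λ₁ t d}` and `|ψ(z)| ≤ e^{λ₂ t}|z|`, then
`ν∘ψ⁻¹ ≤ (κ₂/κ₁) e^{(λ₂(d+α) − λ₁ d)t} ν`. -/
theorem stmt_5 (d : ℕ) (hd : 1 ≤ d) (α κ₁ κ₂ lam1 lam2 t : ℝ)
    (hα : α ∈ Set.Ioo (0:ℝ) 2) (hκ₁ : 0 < κ₁) (hκ₂ : 0 < κ₂) (ht : 0 ≤ t)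
    (n : EuclideanSpace ℝ (Fin d) → ℝ) (hn : Measurable n)
    (hn1 : ∀ z : EuclideanSpace ℝ (Fin d), z ≠ 0 → κ₁ / ‖z‖ ^ ((d : ℝ) + α) ≤ n z)
    (hn2 : ∀ z : EuclideanSpace ℝ (Fin d), z ≠ 0 → n z ≤ κ₂ / ‖z‖ ^ ((d : ℝ) + α))
    (ψ : EuclideanSpace ℝ (Fin d) ≃ EuclideanSpace ℝ (Fin d))
    (hψ : ContDiff ℝ 1 (⇑ψ)) (hψinv : ContDiff ℝ 1 (⇑ψ.symm))
    (hdet : ∀ z, Real.exp (lam1 * t * d) ≤ |LinearMap.det (fderiv ℝ (⇑ψ) z).toLinearMap|)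
    (hgrow : ∀ z, ‖ψ z‖ ≤ Real.exp (lam2 * t) * ‖z‖) :
    ∀ A : Set (EuclideanSpace ℝ (Fin d)), MeasurableSet A →
      Measure.map (⇑ψ) (volume.withDensity fun z => ENNReal.ofReal (n z)) A ≤
        ENNReal.ofReal (κ₂ / κ₁ * Real.exp ((lam2 * ((d : ℝ) + α) - lam1 * d) * t)) *
          (volume.withDensity fun z => ENNReal.ofReal (n z)) A := by
  intro A hA
  haveI : NeZero d := ⟨by omega⟩
  have hmeas : Measurable (⇑ψ) := hψ.continuous.measurable
  have h0 : ψ 0 = 0 := by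
    have := hgrow 0
    rw [norm_zero, mul_zero] at this
    exact norm_le_zero_iff.mp this
  have hp : 0 ≤ (d : ℝ) + α := by
    have := hα.1
    positivity
  have hS : MeasurableSet (ψ ⁻¹' A) := hmeas hA
  have himg : ψ '' (ψ ⁻¹' A) = A := Set.image_preimage_eq A ψ.surjective
  set C : ℝ := κ₂ / κ₁ * Real.exp ((lam2 * ((d : ℝ) + α) - lam1 * d) * t) with hC
  have hCpos : 0 ≤ C := by positivity
  have key : ∀ z : EuclideanSpace ℝ (Fin d), z ≠ 0 →
      n z ≤ C * (|(fderiv ℝ (⇑ψ) z).det| * n (ψ z)) := by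
    intro z hz
    have hpz : ψ z ≠ 0 := fun h => hz (ψ.injective (h.trans h0.symm))
    have hzn : 0 < ‖z‖ := norm_pos_iff.mpr hz
    have hpn : 0 < ‖ψ z‖ := norm_pos_iff.mpr hpz
    have hx : 0 < ‖z‖ ^ ((d : ℝ) + α) := Real.rpow_pos_of_pos hzn _
    have hy : 0 < ‖ψ z‖ ^ ((d : ℝ) + α) := Real.rpow_pos_of_pos hpn _
    have h1 : ‖ψ z‖ ^ ((d : ℝ) + α) ≤
        Real.exp (lam2 * t * ((d : ℝ) + α)) * ‖z‖ ^ ((d : ℝ) + α) := by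
      have := Real.rpow_le_rpow hpn.le (hgrow z) hp
      rwa [Real.mul_rpow (Real.exp_pos _).le hzn.le, ← Real.exp_mul] at this
    have h2 : Real.exp (lam1 * t * d) * (κ₁ / ‖ψ z‖ ^ ((d : ℝ) + α)) ≤
        |(fderiv ℝ (⇑ψ) z).det| * n (ψ z) :=
      mul_le_mul (hdet z) (hn1 _ hpz) (by positivity) (abs_nonneg _)
    refine (hn2 z hz).trans (le_trans ?_ (mul_le_mul_of_nonneg_left h2 hCpos))
    have h3 : C * (Real.exp (lam1 * t * d) * (κ₁ / ‖ψ z‖ ^ ((d : ℝ) + α))) =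
        κ₂ * Real.exp (lam2 * t * ((d : ℝ) + α)) / ‖ψ z‖ ^ ((d : ℝ) + α) := by
      have : Real.exp (lam2 * t * ((d : ℝ) + α)) =
          Real.exp ((lam2 * ((d : ℝ) + α) - lam1 * d) * t) * Real.exp (lam1 * t * d) := by
        rw [← Real.exp_add]; congr 1; ring
      rw [this, hC]
      field_simp
    rw [h3, div_le_div_iff₀ hx hy, mul_assoc]
    exact mul_le_mul_of_nonneg_left h1 hκ₂.le
  rw [Measure.map_apply hmeas hA, withDensity_apply _ hS, withDensity_apply _ hA]
  have hcv := lintegral_image_eq_lintegral_abs_det_fderiv_mul volume hS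
    (fun x _ => ((hψ.differentiable one_ne_zero) x).hasFDerivAt.hasFDerivWithinAt)
    ψ.injective.injOn (fun z => ENNReal.ofReal (n z))
  rw [himg] at hcv
  rw [hcv, ← lintegral_const_mul' _ _ ENNReal.ofReal_ne_top]
  apply lintegral_mono_ae
  apply ae_restrict_of_ae
  have hae : ∀ᵐ z : EuclideanSpace ℝ (Fin d), z ≠ 0 := by
    simp [ae_iff]
  filter_upwards [hae] with z hz
  rw [← ENNReal.ofReal_mul (abs_nonneg _), ← ENNReal.ofReal_mul hCpos]
  exact ENNReal.ofReal_le_ofReal (key z hz)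
end

section
/- Let d ≥ 1, α ∈ (0,2), κ₁, κ₂ > 0, λ₁ ∈ ℝ, λ₂ ≤ 0, and t ≥ 0. Let ρ : (0,∞) → [0,∞) be nonincreasing and let ν be the measure on ℝ^d given by ν(dz) = n(z) dz where n is measurable with κ₁ρ(|z|)/|z|^{d+α} ≤ n(z) ≤ κ₂ρ(|z|)/|z|^{d+α} for all z ≠ 0. Let ψ : ℝ^d → ℝ^d be a C¹ diffeomorphism such that |det Dψ(z)| ≥ e^{λ₁ t d} for all z and |ψ(z)| ≤ e^{λ₂ t}|z| for all z. Then ν∘ψ^{-1} ≤ (κ₂/κ₁) · e^{(λ₂(d+α) − λ₁ d) t} · ν. -/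
open MeasureTheory

/-- Pushforward density estimate, small-jump case: if
`κ₁ρ(|z|)/|z|^{d+α} ≤ dν/dz ≤ κ₂ρ(|z|)/|z|^{d+α}` with `ρ` nonincreasing, `λ₂ ≤ 0`,
and `ψ` is a `C¹` diffeomorphism with `|det Dψ| ≥ e^{λ₁ t d}` and
`|ψ(z)| ≤ e^{λ₂ t}|z|`, then `ν∘ψ⁻¹ ≤ (κ₂/κ₁) e^{(λ₂(d+α) − λ₁ d)t} ν`. -/
theorem stmt_6 (d : ℕ) (hd : 1 ≤ d) (α κ₁ κ₂ lam1 lam2 t : ℝ)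
    (hα : α ∈ Set.Ioo (0:ℝ) 2) (hκ₁ : 0 < κ₁) (hκ₂ : 0 < κ₂)
    (hlam2 : lam2 ≤ 0) (ht : 0 ≤ t)
    (ρ : ℝ → ℝ) (hρ : ∀ s, 0 < s → 0 ≤ ρ s) (hρmono : AntitoneOn ρ (Set.Ioi 0))
    (n : EuclideanSpace ℝ (Fin d) → ℝ) (hn : Measurable n)
    (hn1 : ∀ z : EuclideanSpace ℝ (Fin d), z ≠ 0 →
      κ₁ * ρ ‖z‖ / ‖z‖ ^ ((d : ℝ) + α) ≤ n z)
    (hn2 : ∀ z : EuclideanSpace ℝ (Fin d), z ≠ 0 →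
      n z ≤ κ₂ * ρ ‖z‖ / ‖z‖ ^ ((d : ℝ) + α))
    (ψ : EuclideanSpace ℝ (Fin d) ≃ EuclideanSpace ℝ (Fin d))
    (hψ : ContDiff ℝ 1 (⇑ψ)) (hψinv : ContDiff ℝ 1 (⇑ψ.symm))
    (hdet : ∀ z, Real.exp (lam1 * t * d) ≤ |LinearMap.det (fderiv ℝ (⇑ψ) z).toLinearMap|)
    (hgrow : ∀ z, ‖ψ z‖ ≤ Real.exp (lam2 * t) * ‖z‖) :
    ∀ A : Set (EuclideanSpace ℝ (Fin d)), MeasurableSet A →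
      Measure.map (⇑ψ) (volume.withDensity fun z => ENNReal.ofReal (n z)) A ≤
        ENNReal.ofReal (κ₂ / κ₁ * Real.exp ((lam2 * ((d : ℝ) + α) - lam1 * d) * t)) *
          (volume.withDensity fun z => ENNReal.ofReal (n z)) A := by
  intro A hA
  have hψc : Measurable (⇑ψ) := hψ.continuous.measurable
  have hs : MeasurableSet (⇑ψ ⁻¹' A) := hψc hA
  have himg : ⇑ψ '' (⇑ψ ⁻¹' A) = A := Set.image_preimage_eq A ψ.surjective
  have hfd : ∀ x ∈ ⇑ψ ⁻¹' A, HasFDerivWithinAt (⇑ψ) (fderiv ℝ (⇑ψ) x) (⇑ψ ⁻¹' A) x :=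
    fun x _ => ((hψ.differentiable one_ne_zero) x).hasFDerivAt.hasFDerivWithinAt
  have hcv := lintegral_image_eq_lintegral_abs_det_fderiv_mul volume hs hfd
    ψ.injective.injOn (fun z => ENNReal.ofReal (n z))
  rw [himg] at hcv
  rw [Measure.map_apply hψc hA, withDensity_apply _ hs, withDensity_apply _ hA, hcv,
    ← lintegral_const_mul' _ _ ENNReal.ofReal_ne_top]
  have h0 : ψ 0 = 0 := by
    have := hgrow 0
    simpa using this
  have : Nonempty (Fin d) := ⟨⟨0, hd⟩⟩
  have hae : ∀ᵐ x : EuclideanSpace ℝ (Fin d), x ≠ 0 := Measure.ae_ne volume 0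
  refine lintegral_mono_ae (ae_restrict_of_ae ?_)
  filter_upwards [hae] with x hx
  have hy : ψ x ≠ 0 := fun h => hx (ψ.injective (h.trans h0.symm))
  rw [← ENNReal.ofReal_mul (abs_nonneg _), ← ENNReal.ofReal_mul (by positivity)]
  apply ENNReal.ofReal_le_ofReal
  have hxp : 0 < ‖x‖ := norm_pos_iff.mpr hx
  have hyp : 0 < ‖ψ x‖ := norm_pos_iff.mpr hy
  have he1 : Real.exp (lam2 * t) ≤ 1 :=
    Real.exp_le_one_iff.mpr (mul_nonpos_of_nonpos_of_nonneg hlam2 ht)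
  have hle : ‖ψ x‖ ≤ ‖x‖ := (hgrow x).trans (mul_le_of_le_one_left hxp.le he1)
  have hρle : ρ ‖x‖ ≤ ρ ‖ψ x‖ := hρmono hyp hxp hle
  have hρx := hρ _ hxp
  have hp : 0 ≤ (d : ℝ) + α := by have := hα.1; positivity
  have hpow : ‖ψ x‖ ^ ((d : ℝ) + α)
      ≤ Real.exp (lam2 * t * ((d : ℝ) + α)) * ‖x‖ ^ ((d : ℝ) + α) := by
    rw [Real.exp_mul, ← Real.mul_rpow (Real.exp_pos _).le hxp.le]
    exact Real.rpow_le_rpow hyp.le (hgrow x) hp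
  have hXp : 0 < ‖x‖ ^ ((d : ℝ) + α) := Real.rpow_pos_of_pos hxp _
  have hYp : 0 < ‖ψ x‖ ^ ((d : ℝ) + α) := Real.rpow_pos_of_pos hyp _
  have hE := Real.exp_pos (lam2 * t * ((d : ℝ) + α))
  have hlow : κ₁ * ρ ‖x‖ / (Real.exp (lam2 * t * ((d : ℝ) + α)) * ‖x‖ ^ ((d : ℝ) + α))
      ≤ n (ψ x) := by
    refine le_trans ?_ (hn1 _ hy)
    gcongr
    exact mul_nonneg hκ₁.le (hρ _ hyp)
  have hnn : 0 ≤ n (ψ x) := le_trans (by positivity) hlow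
  have hD : Real.exp (lam1 * t * d) ≤ |(fderiv ℝ (⇑ψ) x).det| := hdet x
  calc n x ≤ κ₂ * ρ ‖x‖ / ‖x‖ ^ ((d : ℝ) + α) := hn2 x hx
    _ = κ₂ / κ₁ * Real.exp (lam2 * t * ((d : ℝ) + α)) *
        (κ₁ * ρ ‖x‖ / (Real.exp (lam2 * t * ((d : ℝ) + α)) * ‖x‖ ^ ((d : ℝ) + α))) := by
      field_simp
    _ ≤ κ₂ / κ₁ * Real.exp (lam2 * t * ((d : ℝ) + α)) * n (ψ x) := by gcongr
    _ = κ₂ / κ₁ * Real.exp ((lam2 * ((d : ℝ) + α) - lam1 * d) * t) *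
        (Real.exp (lam1 * t * d) * n (ψ x)) := by
      have : lam2 * t * ((d : ℝ) + α)
        = (lam2 * ((d : ℝ) + α) - lam1 * d) * t + lam1 * t * d := by ring
      rw [this, Real.exp_add]
      ring
    _ ≤ _ := by gcongr
end

section
/- Let d ≥ 1, λ < 0, δ ≥ 0, and let b, b̃ : ℝ^d → ℝ^d satisfy ⟨b(u) − b(v), u − v⟩ ≤ λ|u − v|² for all u, v ∈ ℝ^d and sup_{u∈ℝ^d} |b(u) − b̃(u)| ≤ δ. Let x, y : [0,∞) → ℝ^d be differentiable with x'(t) − y'(t) = b(x(t)) − b̃(y(t)) for all t ≥ 0 and x(0) = y(0). Then |x(t) − y(t)| ≤ δ/(−λ) for all t ≥ 0. -/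
open scoped RealInnerProductSpace

/-- Uniform closeness of solutions for a dissipative drift and a `δ`-perturbation:
if `⟨b(u)−b(v), u−v⟩ ≤ λ|u−v|²` with `λ < 0`, `sup|b − b̃| ≤ δ`, and
`x' − y' = b∘x − b̃∘y` with `x(0) = y(0)`, then `|x(t)−y(t)| ≤ δ/(−λ)` for all `t ≥ 0`. -/
theorem stmt_14 (d : ℕ) (hd : 1 ≤ d) (lam δ : ℝ) (hlam : lam < 0) (hδ : 0 ≤ δ)
    (b btilde : EuclideanSpace ℝ (Fin d) → EuclideanSpace ℝ (Fin d))
    (hb : ∀ u v, ⟪b u - b v, u - v⟫ ≤ lam * ‖u - v‖ ^ 2)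
    (hclose : ∀ u, ‖b u - btilde u‖ ≤ δ)
    (x y x' y' : ℝ → EuclideanSpace ℝ (Fin d))
    (hx : ∀ t ∈ Set.Ici (0:ℝ), HasDerivWithinAt x (x' t) (Set.Ici 0) t)
    (hy : ∀ t ∈ Set.Ici (0:ℝ), HasDerivWithinAt y (y' t) (Set.Ici 0) t)
    (hxy : ∀ t ∈ Set.Ici (0:ℝ), x' t - y' t = b (x t) - btilde (y t))
    (h0 : x 0 = y 0) :
    ∀ t ∈ Set.Ici (0:ℝ), ‖x t - y t‖ ≤ δ / (-lam) := by
  intro t ht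
  refine le_of_forall_pos_le_add fun ε hε => ?_
  obtain ⟨K, hK⟩ : ∃ K, K = δ / (-lam) + ε := ⟨_, rfl⟩
  have hK0 : 0 < K := by
    have : 0 ≤ δ / (-lam) := div_nonneg hδ (by linarith)
    linarith
  have hKl : lam * K + δ < 0 := by
    have h1 : lam * K + δ = lam * ε := by
      rw [hK]
      have : lam ≠ 0 := hlam.ne
      field_simp
      ring
    rw [h1]
    exact mul_neg_of_neg_of_pos hlam hε
  rw [← hK]
  have hder : ∀ s ∈ Set.Ici (0:ℝ), HasDerivWithinAt (fun s => ‖x s - y s‖ ^ 2)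
      (2 * ⟪x s - y s, x' s - y' s⟫) (Set.Ici 0) s := fun s hs =>
    ((hx s hs).sub (hy s hs)).norm_sq
  have key := image_le_of_deriv_right_lt_deriv_boundary (a := 0) (b := t)
    (f := fun s => ‖x s - y s‖ ^ 2) (f' := fun s => 2 * ⟪x s - y s, x' s - y' s⟫)
    (B := fun _ => K ^ 2) (B' := fun _ => 0)
    (fun s hs => ((hder s hs.1).continuousWithinAt).mono fun r hr => hr.1)
    (fun s hs => (hder s hs.1).mono (Set.Ici_subset_Ici.2 hs.1))
    (by simpa [h0] using sq_nonneg K)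
    (fun s => hasDerivAt_const s _)
    (by
      intro s hs he
      have hn : ‖x s - y s‖ = K := (sq_eq_sq₀ (norm_nonneg _) hK0.le).1 he
      have h1 := hb (x s) (y s)
      have h2 : ⟪b (y s) - btilde (y s), x s - y s⟫ ≤ δ * K := by
        refine (real_inner_le_norm _ _).trans ?_
        rw [hn]
        exact mul_le_mul_of_nonneg_right (hclose _) hK0.le
      have h3 : ⟪x s - y s, x' s - y' s⟫ = ⟪b (x s) - b (y s), x s - y s⟫
          + ⟪b (y s) - btilde (y s), x s - y s⟫ := by
        rw [hxy s hs.1, real_inner_comm, ← inner_add_left]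
        congr 1
        abel
      rw [hn] at h1
      change 2 * ⟪x s - y s, x' s - y' s⟫ < 0
      rw [h3]
      have := mul_neg_of_neg_of_pos hKl hK0
      nlinarith)
  have h := key (x := t) ⟨ht, le_refl t⟩
  exact (sq_le_sq₀ (norm_nonneg _) hK0.le).1 h
end

section
/- Let p ∈ [1,2] and define Ψ : (0,∞) × (0,∞) → ℝ by Ψ(u,v) := u^p − v^p − p v^{p-1}(u − v). Then Ψ is nonnegative and jointly convex on (0,∞) × (0,∞). -/
theorem aux_second (p : ℝ) (hp : p ∈ Set.Icc (1:ℝ) 2) (u v a b : ℝ) (hu : 0 < u) (hv : 0 < v) :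
    0 ≤ p * (p - 1) * (u ^ (p-2) * a^2 + (p-1) * v^(p-2) * b^2
      + (2 - p) * v^(p-3) * u * b^2 - 2 * v^(p-2) * a * b) := by
  obtain ⟨h1, h2⟩ := hp
  have hr : 0 < u / v := div_pos hu hv
  have hamgm := Real.geom_mean_le_arith_mean2_weighted (w₁ := 2 - p) (w₂ := p - 1)
    (p₁ := u / v) (p₂ := 1) (by linarith) (by linarith) hr.le zero_le_one (by ring)
  rw [Real.one_rpow, mul_one, mul_one] at hamgm
  have hs : 0 < (u / v) ^ (p - 2) := Real.rpow_pos_of_pos hr _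
  have hmul : (u / v) ^ (p - 2) * (u / v) ^ (2 - p) = 1 := by
    rw [← Real.rpow_add hr]; norm_num
  have hV : 0 < v ^ (p - 2) := Real.rpow_pos_of_pos hv _
  have e1 : u ^ (p - 2) = (u / v) ^ (p - 2) * v ^ (p - 2) := by
    rw [← Real.mul_rpow hr.le hv.le, div_mul_cancel₀ _ hv.ne']
  have e2 : v ^ (p - 3) * u = v ^ (p - 2) * (u / v) := by
    rw [show p - 3 = p - 2 - 1 by ring, Real.rpow_sub_one hv.ne']; field_simp
  set s := (u / v) ^ (p - 2)
  set c := (u / v) ^ (2 - p)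
  set r := u / v
  set V := v ^ (p - 2)
  have key : 0 ≤ s * a ^ 2 - 2 * a * b + ((p - 1) + (2 - p) * r) * b ^ 2 := by
    have h3 : 0 ≤ s * a ^ 2 - 2 * a * b + c * b ^ 2 := by
      have hc : 0 < c := Real.rpow_pos_of_pos hr _
      have : s * a ^ 2 - 2 * a * b + c * b ^ 2 = c * (s * a - b) ^ 2 := by
        linear_combination (-(s * a ^ 2) + 2 * a * b) * hmul
      rw [this]; positivity
    nlinarith [mul_le_mul_of_nonneg_right hamgm (sq_nonneg b)]
  have : u ^ (p-2) * a^2 + (p-1) * V * b^2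
      + (2 - p) * v^(p-3) * u * b^2 - 2 * V * a * b
      = V * (s * a ^ 2 - 2 * a * b + ((p - 1) + (2 - p) * r) * b ^ 2) := by
    rw [e1]; linear_combination (2 - p) * b ^ 2 * e2
  rw [this]
  exact mul_nonneg (mul_nonneg (by linarith) (by linarith)) (mul_nonneg hV.le key)

theorem aux_line (p : ℝ) (hp : p ∈ Set.Icc (1:ℝ) 2) (x₁ x₂ a b : ℝ)
    (hu : ∀ t ∈ Set.Icc (0:ℝ) 1, 0 < x₁ + t * a) (hv : ∀ t ∈ Set.Icc (0:ℝ) 1, 0 < x₂ + t * b) :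
    ConvexOn ℝ (Set.Icc (0:ℝ) 1) (fun t : ℝ => (x₁ + t * a) ^ p - (x₂ + t * b) ^ p
      - p * (x₂ + t * b) ^ (p - 1) * ((x₁ + t * a) - (x₂ + t * b))) := by
  have hl : ∀ x c t : ℝ, HasDerivAt (fun t : ℝ => x + t * c) c t := fun x c t => by
    simpa using ((hasDerivAt_id t).mul_const c).const_add x
  have d1 : ∀ t ∈ Set.Icc (0:ℝ) 1, HasDerivAt (fun t : ℝ => (x₁ + t * a) ^ p - (x₂ + t * b) ^ p
      - p * (x₂ + t * b) ^ (p - 1) * ((x₁ + t * a) - (x₂ + t * b)))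
      (p * a * ((x₁ + t * a) ^ (p - 1) - (x₂ + t * b) ^ (p - 1))
        - p * (p - 1) * b * ((x₂ + t * b) ^ (p - 2) * ((x₁ + t * a) - (x₂ + t * b)))) t := by
    intro t ht
    have := (((hl x₁ a t).rpow_const (p := p) (Or.inl (hu t ht).ne')).sub
      ((hl x₂ b t).rpow_const (p := p) (Or.inl (hv t ht).ne'))).sub
      ((((hl x₂ b t).rpow_const (p := p - 1) (Or.inl (hv t ht).ne')).const_mul p).mul
        ((hl x₁ a t).sub (hl x₂ b t)))
    refine this.congr_deriv ?_
    rw [show p - 1 - 1 = p - 2 by ring]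
    simp only [Pi.sub_apply]
    ring
  refine convexOn_of_hasDerivWithinAt2_nonneg (convex_Icc 0 1)
    (f' := fun t => p * a * ((x₁ + t * a) ^ (p - 1) - (x₂ + t * b) ^ (p - 1))
        - p * (p - 1) * b * ((x₂ + t * b) ^ (p - 2) * ((x₁ + t * a) - (x₂ + t * b))))
    (f'' := fun t => p * (p - 1) * ((x₁ + t * a) ^ (p-2) * a^2 + (p-1) * (x₂ + t * b)^(p-2) * b^2
      + (2 - p) * (x₂ + t * b)^(p-3) * (x₁ + t * a) * b^2 - 2 * (x₂ + t * b)^(p-2) * a * b))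
    (fun t ht => (d1 t ht).continuousAt.continuousWithinAt)
    (fun t ht => (d1 t (interior_subset ht)).hasDerivWithinAt) ?_ ?_
  · intro t ht
    replace ht := interior_subset ht
    have hv' := hv t ht
    have := ((((hl x₁ a t).rpow_const (p := p - 1) (Or.inl (hu t ht).ne')).sub
      ((hl x₂ b t).rpow_const (p := p - 1) (Or.inl hv'.ne'))).const_mul (p * a)).sub
      ((((hl x₂ b t).rpow_const (p := p - 2) (Or.inl hv'.ne')).mul
        ((hl x₁ a t).sub (hl x₂ b t))).const_mul (p * (p - 1) * b))
    refine (this.congr_deriv ?_).hasDerivWithinAt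
    have e : (x₂ + t * b) ^ (p - 2) = (x₂ + t * b) ^ (p - 3) * (x₂ + t * b) := by
      rw [← Real.rpow_add_one hv'.ne']; ring_nf
    rw [show p - 1 - 1 = p - 2 by ring, show p - 2 - 1 = p - 3 by ring]
    simp only [Pi.sub_apply]
    rw [e]
    ring
  · intro t ht
    exact aux_second p hp _ _ a b (hu t (interior_subset ht)) (hv t (interior_subset ht))

/-- For `Φ(u) = u^p` with `p ∈ [1,2]`, the function
`Ψ(u,v) = u^p − v^p − p v^{p−1}(u − v)` is nonnegative and jointly convex on
`(0,∞) × (0,∞)`. -/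
theorem stmt_17 (p : ℝ) (hp : p ∈ Set.Icc (1:ℝ) 2) :
    (∀ u v : ℝ, 0 < u → 0 < v →
      0 ≤ u ^ p - v ^ p - p * v ^ (p - 1) * (u - v)) ∧
    ConvexOn ℝ (Set.Ioi (0:ℝ) ×ˢ Set.Ioi (0:ℝ))
      (fun q : ℝ × ℝ => q.1 ^ p - q.2 ^ p - p * q.2 ^ (p - 1) * (q.1 - q.2)) := by
  constructor
  · intro u v hu hv
    have hr : 0 < u / v := div_pos hu hv
    have h := one_add_mul_self_le_rpow_one_add (s := u / v - 1) (by linarith) hp.1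
    rw [add_sub_cancel, Real.div_rpow hu.le hv.le] at h
    have hV : 0 < v ^ p := Real.rpow_pos_of_pos hv _
    rw [le_div_iff₀ hV] at h
    have e : (1 + p * (u / v - 1)) * v ^ p = v ^ p + p * v ^ (p - 1) * (u - v) := by
      rw [Real.rpow_sub_one hv.ne']; field_simp
    linarith
  · refine ⟨(convex_Ioi 0).prod (convex_Ioi 0), ?_⟩
    rintro ⟨x₁, x₂⟩ ⟨hx₁, hx₂⟩ ⟨y₁, y₂⟩ ⟨hy₁, hy₂⟩ a b ha hb hab
    simp only [Set.mem_Ioi] at hx₁ hx₂ hy₁ hy₂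
    have pos : ∀ x y : ℝ, 0 < x → 0 < y → ∀ t ∈ Set.Icc (0:ℝ) 1, 0 < x + t * (y - x) := by
      intro x y hx hy t ht
      have := (convex_Ioi (0:ℝ)) (Set.mem_Ioi.2 hx) (Set.mem_Ioi.2 hy)
        (sub_nonneg.2 ht.2) ht.1 (by ring)
      simp only [smul_eq_mul, Set.mem_Ioi] at this
      linarith
    have h := (aux_line p hp x₁ x₂ (y₁ - x₁) (y₂ - x₂) (pos _ _ hx₁ hy₁) (pos _ _ hx₂ hy₂)).2
      (Set.left_mem_Icc.2 zero_le_one) (Set.right_mem_Icc.2 zero_le_one) ha hb hab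
    obtain rfl : a = 1 - b := by linarith
    simp only [smul_eq_mul, mul_zero, zero_add, mul_one, zero_mul, add_zero, one_mul,
      add_sub_cancel] at h
    simp only [smul_eq_mul, Prod.smul_mk, Prod.mk_add_mk]
    rw [show (1 - b) * x₁ + b * y₁ = x₁ + b * (y₁ - x₁) by ring,
      show (1 - b) * x₂ + b * y₂ = x₂ + b * (y₂ - x₂) by ring]
    exact h
end

section
/- Let d ≥ 1 and θ < 0. Let ν be a measure on ℝ^d with ∫_{{|z|>1}} |z|^{1-θ} ν(dz) < ∞, and set M := ∫_{{|z|>1}} |z| ν(dz). Let σ₂ : ℝ^d → ℝ^{d×d} and suppose L := limsup_{|x|→∞} ‖σ₂(x)‖ · |x|^{-θ} < ∞. Then limsup_{|x|→∞} ∫_{{|z|>1}} |z| · ‖σ₂(x)‖ · (|x| + ‖σ₂(x)‖·|z|)^{-θ} ν(dz) ≤ L · M. -/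
open MeasureTheory Filter

/-- The implication from condition (21) to condition (21') in Corollary 3.2(4):
for `θ < 0`, `∫_{|z|>1}|z|^{1-θ} ν(dz) < ∞`, and
`L = limsup_{|x|→∞} ‖σ₂(x)‖|x|^{-θ} < ∞`, one has
`limsup_{|x|→∞} ∫_{|z|>1} |z|‖σ₂(x)‖(|x|+‖σ₂(x)‖|z|)^{-θ} ν(dz) ≤ L·M`,
where `M = ∫_{|z|>1} |z| ν(dz)`. -/
theorem stmt_18 (d : ℕ) (hd : 1 ≤ d) (θ : ℝ) (hθ : θ < 0)
    (ν : Measure (EuclideanSpace ℝ (Fin d)))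
    (hν : ∫⁻ z in {z : EuclideanSpace ℝ (Fin d) | 1 < ‖z‖},
        ENNReal.ofReal (‖z‖ ^ (1 - θ)) ∂ν ≠ ⊤)
    (σ₂ : EuclideanSpace ℝ (Fin d) → EuclideanSpace ℝ (Fin d) →L[ℝ] EuclideanSpace ℝ (Fin d))
    (hL : limsup (fun x => ENNReal.ofReal (‖σ₂ x‖ * ‖x‖ ^ (-θ)))
        (comap (fun x : EuclideanSpace ℝ (Fin d) => ‖x‖) atTop) ≠ ⊤) :
    limsup
        (fun x => ∫⁻ z in {z : EuclideanSpace ℝ (Fin d) | 1 < ‖z‖},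
          ENNReal.ofReal (‖z‖ * ‖σ₂ x‖ * (‖x‖ + ‖σ₂ x‖ * ‖z‖) ^ (-θ)) ∂ν)
        (comap (fun x : EuclideanSpace ℝ (Fin d) => ‖x‖) atTop) ≤
      (limsup (fun x => ENNReal.ofReal (‖σ₂ x‖ * ‖x‖ ^ (-θ)))
        (comap (fun x : EuclideanSpace ℝ (Fin d) => ‖x‖) atTop)) *
      ∫⁻ z in {z : EuclideanSpace ℝ (Fin d) | 1 < ‖z‖}, ENNReal.ofReal ‖z‖ ∂ν := by
  set l := comap (fun x : EuclideanSpace ℝ (Fin d) => ‖x‖) atTop with hl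
  rcases eq_or_neBot l with hbot | hne
  · rw [hbot]; simp
  set S := {z : EuclideanSpace ℝ (Fin d) | 1 < ‖z‖} with hS
  have hSm : MeasurableSet S := measurableSet_lt measurable_const measurable_norm
  have hnorm : Tendsto (fun x : EuclideanSpace ℝ (Fin d) => ‖x‖) l atTop := tendsto_comap
  have hp : 0 < -θ := by linarith
  set L := limsup (fun x => ENNReal.ofReal (‖σ₂ x‖ * ‖x‖ ^ (-θ))) l with hLdef
  -- eventual bound on the coefficient
  have hlt : L < L + 1 := ENNReal.lt_add_right hL one_ne_zero
  have hev : ∀ᶠ x in l, ‖σ₂ x‖ * ‖x‖ ^ (-θ) ≤ (L + 1).toReal := by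
    filter_upwards [eventually_lt_of_limsup_lt hlt] with x hx
    exact (ENNReal.ofReal_le_iff_le_toReal (by simp [hL])).1 hx.le
  have hδ : Tendsto (fun x => ‖σ₂ x‖ / ‖x‖) l (nhds 0) := by
    have h2 : Tendsto (fun x : EuclideanSpace ℝ (Fin d) => (L + 1).toReal / ‖x‖) l (nhds 0) :=
      tendsto_const_nhds.div_atTop hnorm
    refine tendsto_of_tendsto_of_tendsto_of_le_of_le' tendsto_const_nhds h2
      (Eventually.of_forall fun x => by positivity) ?_
    filter_upwards [hev, hnorm.eventually_ge_atTop 1] with x hx h1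
    have h3 : 1 ≤ ‖x‖ ^ (-θ) := Real.one_le_rpow h1 hp.le
    gcongr
    nlinarith [norm_nonneg (σ₂ x)]
  have hv : Tendsto (fun x => ∫⁻ z in S,
      ENNReal.ofReal (‖z‖ * (1 + ‖σ₂ x‖ / ‖x‖ * ‖z‖) ^ (-θ)) ∂ν) l
      (nhds (∫⁻ z in S, ENNReal.ofReal ‖z‖ ∂ν)) := by
    refine tendsto_lintegral_filter_of_dominated_convergence
      (fun z => ENNReal.ofReal (2 ^ (-θ)) * ENNReal.ofReal (‖z‖ ^ (1 - θ))) ?_ ?_ ?_ ?_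
    · exact Eventually.of_forall fun x => by fun_prop
    · filter_upwards [hδ.eventually_le_const (zero_lt_one)] with x hx
      filter_upwards [ae_restrict_mem hSm] with z hz
      have hz1 : 1 < ‖z‖ := hz
      rw [← ENNReal.ofReal_mul (by positivity)]
      apply ENNReal.ofReal_le_ofReal
      have e : ‖z‖ ^ (1 - θ) = ‖z‖ * ‖z‖ ^ (-θ) := by
        rw [sub_eq_add_neg, Real.rpow_add (by linarith), Real.rpow_one]
      have h4 : (1 + ‖σ₂ x‖ / ‖x‖ * ‖z‖) ^ (-θ) ≤ (2 * ‖z‖) ^ (-θ) := by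
        apply Real.rpow_le_rpow (by positivity) _ hp.le
        nlinarith
      rw [Real.mul_rpow (by norm_num) (norm_nonneg z)] at h4
      rw [e]
      calc _ ≤ ‖z‖ * (2 ^ (-θ) * ‖z‖ ^ (-θ)) := by gcongr
        _ = _ := by ring
    · rw [lintegral_const_mul' _ _ ENNReal.ofReal_ne_top]
      exact ENNReal.mul_ne_top ENNReal.ofReal_ne_top hν
    · refine Eventually.of_forall fun z => ?_
      apply ENNReal.tendsto_ofReal
      have h5 : Tendsto (fun x => 1 + ‖σ₂ x‖ / ‖x‖ * ‖z‖) l (nhds 1) := by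
        simpa using (hδ.mul_const ‖z‖).const_add 1
      simpa using (h5.rpow_const (p := -θ) (Or.inl one_ne_zero)).const_mul ‖z‖
  have hM : ∫⁻ z in S, ENNReal.ofReal ‖z‖ ∂ν ≠ ⊤ := by
    refine ne_top_of_le_ne_top hν (setLIntegral_mono' hSm fun z hz => ?_)
    have hz1 : 1 < ‖z‖ := hz
    apply ENNReal.ofReal_le_ofReal
    simpa using Real.rpow_le_rpow_of_exponent_le hz1.le (show (1 : ℝ) ≤ 1 - θ by linarith)
  have heq : (fun x => ∫⁻ z in S,
        ENNReal.ofReal (‖z‖ * ‖σ₂ x‖ * (‖x‖ + ‖σ₂ x‖ * ‖z‖) ^ (-θ)) ∂ν) =ᶠ[l]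
      (fun x => ENNReal.ofReal (‖σ₂ x‖ * ‖x‖ ^ (-θ))) * (fun x => ∫⁻ z in S,
        ENNReal.ofReal (‖z‖ * (1 + ‖σ₂ x‖ / ‖x‖ * ‖z‖) ^ (-θ)) ∂ν) := by
    filter_upwards [hnorm.eventually_ge_atTop 1] with x h1
    have hx0 : 0 < ‖x‖ := by linarith
    rw [Pi.mul_apply, ← lintegral_const_mul' _ _ ENNReal.ofReal_ne_top]
    refine lintegral_congr fun z => ?_
    rw [← ENNReal.ofReal_mul (by positivity)]
    congr 1
    have : ‖x‖ + ‖σ₂ x‖ * ‖z‖ = ‖x‖ * (1 + ‖σ₂ x‖ / ‖x‖ * ‖z‖) := by field_simp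
    rw [this, Real.mul_rpow hx0.le (by positivity)]
    ring
  rw [limsup_congr heq, ← hv.limsup_eq]
  refine ENNReal.limsup_mul_le' (Or.inr ?_) (Or.inl hL)
  rw [hv.limsup_eq]
  exact hM
end

section
/- Let d ≥ 1, let σ be a d×d real matrix, let λ < 0, and let b : ℝ^d → ℝ^d satisfy ⟨b(x) − b(y), x − y⟩ ≤ λ|x − y|² for all x, y ∈ ℝ^d. Let ν be a measure on ℝ^d with ∫_{{|z|≤1}} |z|² ν(dz) < ∞ and ∫_{{|z|>1}} |z| ν(dz) < ∞. Define W(x) := √(1 + |x|²). Then there exist constants C₁, C₂ > 0 such that for all x ∈ ℝ^d, ⟨∇W(x), b(x)⟩ + ∫_{ℝ^d} [W(x + σz) − W(x) − ⟨∇W(x), σz⟩ 1_{|z|≤1}] ν(dz) ≤ C₁ − C₂|x|. -/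
open MeasureTheory
open scoped RealInnerProductSpace

lemma gradW {d : ℕ} (x : EuclideanSpace ℝ (Fin d)) :
    gradient (fun y : EuclideanSpace ℝ (Fin d) => Real.sqrt (1 + ‖y‖ ^ 2)) x
      = (1 / Real.sqrt (1 + ‖x‖ ^ 2)) • x := by
  apply HasGradientAt.gradient
  rw [hasGradientAt_iff_hasFDerivAt]
  have h1 : HasFDerivAt (fun y : EuclideanSpace ℝ (Fin d) => 1 + ‖y‖ ^ 2)
      (2 • (innerSL ℝ x)) x := ((hasStrictFDerivAt_norm_sq x).hasFDerivAt).const_add 1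
  have h2 := h1.sqrt (by positivity)
  have h3 : (InnerProductSpace.toDual ℝ (EuclideanSpace ℝ (Fin d)))
      ((1 / Real.sqrt (1 + ‖x‖ ^ 2)) • x)
      = (1 / (2 * Real.sqrt (1 + ‖x‖ ^ 2))) • 2 • (innerSL ℝ) x := by
    apply ContinuousLinearMap.ext
    intro y
    rw [InnerProductSpace.toDual_apply_apply, real_inner_smul_left]
    simp only [ContinuousLinearMap.smul_apply, innerSL_apply_apply, smul_eq_mul, nsmul_eq_mul]
    push_cast
    field_simp
  rw [h3]
  exact h2

lemma W_small {E : Type*} [NormedAddCommGroup E] [InnerProductSpace ℝ E] (x h : E) :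
    Real.sqrt (1 + ‖x + h‖ ^ 2) - Real.sqrt (1 + ‖x‖ ^ 2)
      - ⟪(1 / Real.sqrt (1 + ‖x‖ ^ 2)) • x, h⟫ ≤ ‖h‖ ^ 2 := by
  set w := Real.sqrt (1 + ‖x‖ ^ 2) with hw
  have hw2 : w ^ 2 = 1 + ‖x‖ ^ 2 := Real.sq_sqrt (by positivity)
  have hw1 : 1 ≤ w := Real.one_le_sqrt.2 (by nlinarith [sq_nonneg ‖x‖])
  have hv2 : Real.sqrt (1 + ‖x + h‖ ^ 2) ^ 2 = 1 + ‖x + h‖ ^ 2 := Real.sq_sqrt (by positivity)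
  set v := Real.sqrt (1 + ‖x + h‖ ^ 2)
  rw [norm_add_sq_real] at hv2
  rw [real_inner_smul_left]
  set i : ℝ := ⟪x, h⟫
  have e : 1 / w * i * w = i := by field_simp
  by_contra! hc
  have h3 := mul_lt_mul_of_pos_right hc (by linarith : 0 < w)
  nlinarith [sq_nonneg (v - w), sq_nonneg ‖h‖]

lemma W_large {E : Type*} [NormedAddCommGroup E] [InnerProductSpace ℝ E] (x h : E) :
    Real.sqrt (1 + ‖x + h‖ ^ 2) - Real.sqrt (1 + ‖x‖ ^ 2) ≤ ‖h‖ := by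
  have hw2 : Real.sqrt (1 + ‖x‖ ^ 2) ^ 2 = 1 + ‖x‖ ^ 2 := Real.sq_sqrt (by positivity)
  have hwx : ‖x‖ ≤ Real.sqrt (1 + ‖x‖ ^ 2) := Real.le_sqrt_of_sq_le (by linarith)
  have : Real.sqrt (1 + ‖x + h‖ ^ 2) ≤ Real.sqrt (1 + ‖x‖ ^ 2) + ‖h‖ := by
    apply Real.sqrt_le_iff.2 ⟨by positivity, ?_⟩
    have := norm_add_le x h
    have h4 : ‖x + h‖ ^ 2 ≤ (‖x‖ + ‖h‖) ^ 2 := by gcongr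
    nlinarith [norm_nonneg h]
  linarith

/-- Lyapunov bound (W2): for a dissipative drift (`⟨b(x)−b(y), x−y⟩ ≤ λ|x−y|²` with
`λ < 0`) and a Lévy measure `ν` with `∫_{|z|≤1}|z|²ν(dz) < ∞`, `∫_{|z|>1}|z|ν(dz) < ∞`,
the generator applied to `W(x) = √(1+|x|²)` satisfies `ℒW(x) ≤ C₁ − C₂|x|`. -/
theorem stmt_19 (d : ℕ) (hd : 1 ≤ d) (σ : Matrix (Fin d) (Fin d) ℝ) (lam : ℝ)
    (hlam : lam < 0)
    (b : EuclideanSpace ℝ (Fin d) → EuclideanSpace ℝ (Fin d))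
    (hb : ∀ x y, ⟪b x - b y, x - y⟫ ≤ lam * ‖x - y‖ ^ 2)
    (ν : Measure (EuclideanSpace ℝ (Fin d)))
    (hν1 : ∫⁻ z in {z : EuclideanSpace ℝ (Fin d) | ‖z‖ ≤ 1},
        ENNReal.ofReal (‖z‖ ^ 2) ∂ν ≠ ⊤)
    (hν2 : ∫⁻ z in {z : EuclideanSpace ℝ (Fin d) | 1 < ‖z‖},
        ENNReal.ofReal ‖z‖ ∂ν ≠ ⊤) :
    ∃ C₁ > (0:ℝ), ∃ C₂ > (0:ℝ), ∀ x : EuclideanSpace ℝ (Fin d),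
      ⟪gradient (fun y : EuclideanSpace ℝ (Fin d) => Real.sqrt (1 + ‖y‖ ^ 2)) x, b x⟫ +
        ∫ z, (Real.sqrt (1 + ‖x + Matrix.toEuclideanLin σ z‖ ^ 2) -
            Real.sqrt (1 + ‖x‖ ^ 2) -
            Set.indicator {z : EuclideanSpace ℝ (Fin d) | ‖z‖ ≤ 1}
              (fun z =>
                ⟪gradient (fun y : EuclideanSpace ℝ (Fin d) => Real.sqrt (1 + ‖y‖ ^ 2)) x,
                  Matrix.toEuclideanLin σ z⟫) z) ∂ν ≤
        C₁ - C₂ * ‖x‖ := by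

  set T := (Matrix.toEuclideanLin σ).toContinuousLinearMap with hT
  have hTz : ∀ z, Matrix.toEuclideanLin σ z = T z := fun z => rfl
  set S := ‖T‖
  have hS : 0 ≤ S := norm_nonneg _
  have hA : MeasurableSet {z : EuclideanSpace ℝ (Fin d) | ‖z‖ ≤ 1} :=
    measurableSet_le measurable_norm measurable_const
  have hB : MeasurableSet {z : EuclideanSpace ℝ (Fin d) | 1 < ‖z‖} :=
    measurableSet_lt measurable_const measurable_norm
  have i1 : IntegrableOn (fun z => ‖z‖ ^ 2) {z : EuclideanSpace ℝ (Fin d) | ‖z‖ ≤ 1} ν := by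
    refine ⟨by fun_prop, ?_⟩
    rw [hasFiniteIntegral_iff_ofReal (Filter.Eventually.of_forall fun z => by positivity)]
    exact hν1.lt_top
  have i2 : IntegrableOn (fun z => ‖z‖) {z : EuclideanSpace ℝ (Fin d) | 1 < ‖z‖} ν := by
    refine ⟨by fun_prop, ?_⟩
    rw [hasFiniteIntegral_iff_ofReal (Filter.Eventually.of_forall fun z => by positivity)]
    exact hν2.lt_top
  set G : EuclideanSpace ℝ (Fin d) → ℝ := fun z =>
    S ^ 2 * Set.indicator {z : EuclideanSpace ℝ (Fin d) | ‖z‖ ≤ 1} (fun z => ‖z‖ ^ 2) z +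
    S * Set.indicator {z : EuclideanSpace ℝ (Fin d) | 1 < ‖z‖} (fun z => ‖z‖) z with hG
  have iG : Integrable G ν :=
    ((i1.integrable_indicator hA).const_mul _).add ((i2.integrable_indicator hB).const_mul _)
  have G0 : ∀ z, 0 ≤ G z := fun z => by
    have a1 := Set.indicator_nonneg (s := {z : EuclideanSpace ℝ (Fin d) | ‖z‖ ≤ 1})
      (f := fun z => ‖z‖ ^ 2) (fun z _ => by positivity) z
    have a2 := Set.indicator_nonneg (s := {z : EuclideanSpace ℝ (Fin d) | 1 < ‖z‖})
      (f := fun z => ‖z‖) (fun z _ => by positivity) z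
    simp only [hG]
    positivity
  have I0 : 0 ≤ ∫ z, G z ∂ν := integral_nonneg G0
  refine ⟨-lam + ‖b 0‖ + ∫ z, G z ∂ν, by have := norm_nonneg (b 0); linarith, -lam,
    by linarith, fun x => ?_⟩
  have hint : ∫ z, (Real.sqrt (1 + ‖x + Matrix.toEuclideanLin σ z‖ ^ 2) -
            Real.sqrt (1 + ‖x‖ ^ 2) -
            Set.indicator {z : EuclideanSpace ℝ (Fin d) | ‖z‖ ≤ 1}
              (fun z =>
                ⟪gradient (fun y : EuclideanSpace ℝ (Fin d) => Real.sqrt (1 + ‖y‖ ^ 2)) x,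
                  Matrix.toEuclideanLin σ z⟫) z) ∂ν ≤ ∫ z, G z ∂ν := by
    by_cases hf : Integrable (fun z => (Real.sqrt (1 + ‖x + Matrix.toEuclideanLin σ z‖ ^ 2) -
            Real.sqrt (1 + ‖x‖ ^ 2) -
            Set.indicator {z : EuclideanSpace ℝ (Fin d) | ‖z‖ ≤ 1}
              (fun z =>
                ⟪gradient (fun y : EuclideanSpace ℝ (Fin d) => Real.sqrt (1 + ‖y‖ ^ 2)) x,
                  Matrix.toEuclideanLin σ z⟫) z)) ν
    · refine integral_mono hf iG fun z => ?_
      simp only [gradW, hTz, hG]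
      have hz : ‖T z‖ ≤ S * ‖z‖ := T.le_opNorm z
      by_cases h : ‖z‖ ≤ 1
      · have h' : ¬ 1 < ‖z‖ := not_lt.2 h
        simp only [Set.indicator, Set.mem_setOf_eq, h, h', if_true, if_false]
        have := W_small x (T z)
        have h5 : ‖T z‖ ^ 2 ≤ (S * ‖z‖) ^ 2 := by gcongr
        linarith [mul_pow S ‖z‖ 2]
      · have h' : 1 < ‖z‖ := not_le.1 h
        simp only [Set.indicator, Set.mem_setOf_eq, h, h', if_true, if_false]
        have := W_large x (T z)
        linarith
    · rw [integral_undef hf]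
      exact I0
  have hdrift : ⟪gradient (fun y : EuclideanSpace ℝ (Fin d) => Real.sqrt (1 + ‖y‖ ^ 2)) x, b x⟫
      ≤ -lam + ‖b 0‖ + lam * ‖x‖ := by
    rw [gradW, real_inner_smul_left]
    have hw2 : Real.sqrt (1 + ‖x‖ ^ 2) ^ 2 = 1 + ‖x‖ ^ 2 := Real.sq_sqrt (by positivity)
    have hwx : ‖x‖ ≤ Real.sqrt (1 + ‖x‖ ^ 2) := Real.le_sqrt_of_sq_le (by linarith)
    have hw1 : 1 ≤ Real.sqrt (1 + ‖x‖ ^ 2) := Real.one_le_sqrt.2 (by nlinarith [sq_nonneg ‖x‖])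
    set w := Real.sqrt (1 + ‖x‖ ^ 2)
    have h0 := hb x 0
    rw [sub_zero, inner_sub_left, real_inner_comm] at h0
    have hc := real_inner_le_norm (b 0) x
    have hx := norm_nonneg x
    have hb0 := norm_nonneg (b 0)
    have k1 : ‖b 0‖ * ‖x‖ ≤ ‖b 0‖ * w := by gcongr
    have k2 : (‖x‖ - 1) * w ≤ ‖x‖ ^ 2 := by nlinarith
    have k3 := mul_le_mul_of_nonpos_left k2 hlam.le
    rw [one_div, inv_mul_le_iff₀ (by linarith)]
    nlinarith
  linarith
end
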